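/- Let C₁,...,Cₙ be pairwise-disjoint convex sets in ℝ², and let ρ ≥ 0. Then the sets Kᵢ* = Cᵢ ⊕ D(ρ) form a family of pseudo-disks: for any i ≠ j, the boundaries ∂Kᵢ* and ∂Kⱼ* intersect in at most two points (assuming general position). -/

import Mathlib

open Pointwise

/-!
Enlarging two convex sets by the same summand `D` adds `h_D` to both support functions, so `A ⊕ D`
and `B ⊕ D` have the same common outer tangent directions as `A` and `B`. By an intermediate value
argument between the normals of the two sets, each common boundary point `p` lies on a common outer
tangent, and this tangent touches the common boundary only at `p` unless the boundaries share a
segment. Finally, `h_A - h_B` is strictly increasing in the direction of a functional separating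
`A` from `B`, so two disjoint convex sets have at most two common outer tangents, one on each side
of the separating line.
-/

section SupportFunction

variable {E : Type*} [NormedAddCommGroup E] [NormedSpace ℝ E] {A B D : Set E} {f g : StrongDual ℝ E}

/-- The support function `h_A` of a set `A`, as a function on the dual space. It is meant for
nonempty sets on which `f` is bounded above; otherwise the supremum takes the junk value `0`. -/
noncomputable def supportFunction (A : Set E) (f : StrongDual ℝ E) : ℝ := sSup (f '' A)

theorem le_supportFunction (hA : IsCompact A) {a : E} (ha : a ∈ A) (f : StrongDual ℝ E) :
    f a ≤ supportFunction A f :=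
  le_csSup (hA.image f.continuous).bddAbove ⟨a, ha, rfl⟩

theorem exists_apply_eq_supportFunction (hA : IsCompact A) (hne : A.Nonempty)
    (f : StrongDual ℝ E) : ∃ a ∈ A, f a = supportFunction A f :=
  (hA.image f.continuous).sSup_mem (hne.image f)

theorem isMaxOn_iff_supportFunction_eq (hA : IsCompact A) {p : E} (hp : p ∈ A) :
    IsMaxOn f A p ↔ supportFunction A f = f p where
  mp h := IsGreatest.csSup_eq ⟨⟨p, hp, rfl⟩, Set.forall_mem_image.2 h⟩
  mpr h _ ha := (le_supportFunction hA ha f).trans_eq h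

theorem supportFunction_add (hA : IsCompact A) (hAne : A.Nonempty) (hB : IsCompact B)
    (hBne : B.Nonempty) (f : StrongDual ℝ E) :
    supportFunction (A + B) f = supportFunction A f + supportFunction B f := by
  rw [supportFunction, Set.image_add]
  exact csSup_add (hAne.image f) (hA.image f.continuous).bddAbove (hBne.image f)
    (hB.image f.continuous).bddAbove

theorem supportFunction_smul (A : Set E) {c : ℝ} (hc : 0 ≤ c) (f : StrongDual ℝ E) :
    supportFunction A (c • f) = c * supportFunction A f := by
  rw [supportFunction, supportFunction, ← smul_eq_mul, ← Real.sSup_smul_of_nonneg hc,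
    ← Set.image_smul, Set.image_image]
  rfl

theorem continuous_supportFunction (hA : IsCompact A) : Continuous (supportFunction A) :=
  hA.continuous_sSup (f := fun (f : StrongDual ℝ E) a => f a) (by fun_prop)

/-- `f` is an outer normal of a common outer tangent of `A` and `B`: a hyperplane `f = c` touching
both sets and having both on its side `f ≤ c`. The functional `f = 0` is allowed, so that the
common outer normals form a cone. -/
def IsCommonOuterNormal (A B : Set E) (f : StrongDual ℝ E) : Prop :=
  supportFunction A f = supportFunction B f

namespace IsCommonOuterNormal

theorem smul (h : IsCommonOuterNormal A B f) {c : ℝ} (hc : 0 ≤ c) :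
    IsCommonOuterNormal A B (c • f) := by
  rw [IsCommonOuterNormal, supportFunction_smul A hc, supportFunction_smul B hc, h]

theorem of_add_right (hA : IsCompact A) (hAne : A.Nonempty) (hB : IsCompact B)
    (hBne : B.Nonempty) (hD : IsCompact D) (hDne : D.Nonempty)
    (h : IsCommonOuterNormal (A + D) (B + D) f) : IsCommonOuterNormal A B f := by
  rw [IsCommonOuterNormal, supportFunction_add hA hAne hD hDne,
    supportFunction_add hB hBne hD hDne] at h
  exact add_right_cancel h

theorem isMaxOn_iff (h : IsCommonOuterNormal A B f) (hA : IsCompact A) (hB : IsCompact B) {p : E}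
    (hpA : p ∈ A) (hpB : p ∈ B) : IsMaxOn f A p ↔ IsMaxOn f B p := by
  rw [isMaxOn_iff_supportFunction_eq hA hpA, isMaxOn_iff_supportFunction_eq hB hpB, h]

theorem exists_mem_segment (hA : IsCompact A) (hB : IsCompact B)
    (hf : supportFunction A f ≤ supportFunction B f)
    (hg : supportFunction B g ≤ supportFunction A g) :
    ∃ k ∈ segment ℝ f g, IsCommonOuterNormal A B k :=
  (convex_segment f g).isPreconnected.intermediate_value₂ (left_mem_segment ℝ f g)
    (right_mem_segment ℝ f g) (continuous_supportFunction hA).continuousOn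
    (continuous_supportFunction hB).continuousOn hf hg

end IsCommonOuterNormal

end SupportFunction

section SupportingFunctionals

variable {E : Type*} [NormedAddCommGroup E] [NormedSpace ℝ E] {K L : Set E}

theorem notMem_interior_of_isMaxOn {f : StrongDual ℝ E} (hf : f ≠ 0) {p : E} (hp : IsMaxOn f K p) :
    p ∉ interior K := fun hpi =>
  hf ((hp.isLocalMax (mem_interior_iff_mem_nhds.1 hpi)).hasFDerivAt_eq_zero f.hasFDerivAt)

theorem segment_subset_frontier_of_isMaxOn (hK : Convex ℝ K) {f : StrongDual ℝ E} (hf : f ≠ 0)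
    {p q : E} (hp : p ∈ K) (hq : q ∈ K) (hmax : IsMaxOn f K p) (hpq : f q = f p) :
    segment ℝ p q ⊆ frontier K := by
  intro x hx
  have hxp : f x = f p := (convex_hyperplane f.isLinear (f p)).segment_subset rfl hpq hx
  have hxmax : IsMaxOn f K x := fun y hy => (hmax hy).trans_eq hxp.symm
  exact ⟨subset_closure (hK.segment_subset hp hq hx), notMem_interior_of_isMaxOn hf hxmax⟩

theorem exists_ne_zero_isMaxOn_of_notMem_interior [FiniteDimensional ℝ E] (hK : Convex ℝ K) {p : E}
    (hp : p ∈ K) (hpi : p ∉ interior K) : ∃ f : StrongDual ℝ E, f ≠ 0 ∧ IsMaxOn f K p := by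
  by_cases hint : (interior K).Nonempty
  · exact geometric_hahn_banach_of_nonempty_interior_point hK hpi hint
  -- With empty interior, `K` lies in a hyperplane, on which some nonzero functional is constant.
  have hspan : vectorSpan ℝ K < ⊤ := by
    rwa [hK.interior_nonempty_iff_affineSpan_eq_top,
      AffineSubspace.affineSpan_eq_top_iff_vectorSpan_eq_top_of_nonempty _ _ _ ⟨p, hp⟩,
      ← Ne, ← lt_top_iff_ne_top] at hint
  obtain ⟨f, hf, hker⟩ := Submodule.exists_le_ker_of_lt_top _ hspan
  refine ⟨f.toContinuousLinearMap, by simpa using hf, fun y hy => ?_⟩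
  have hyp : f y - f p = 0 := (map_sub f y p).symm.trans (hker (vsub_mem_vectorSpan ℝ hy hp))
  exact (sub_eq_zero.1 hyp).le

theorem exists_isCommonOuterNormal_mem_openSegment [FiniteDimensional ℝ E] (hK : IsCompact K)
    (hKc : Convex ℝ K) (hL : IsCompact L) (hLc : Convex ℝ L) {p : E}
    (hp : p ∈ frontier K ∩ frontier L) :
    ∃ f g : StrongDual ℝ E, f ≠ 0 ∧ g ≠ 0 ∧ IsMaxOn f K p ∧ IsMaxOn g L p ∧
      ∃ k ∈ openSegment ℝ f g, IsCommonOuterNormal K L k := by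
  have hpK := hK.isClosed.frontier_subset hp.1
  have hpL := hL.isClosed.frontier_subset hp.2
  obtain ⟨f, hf, hfp⟩ := exists_ne_zero_isMaxOn_of_notMem_interior hKc hpK hp.1.2
  obtain ⟨g, hg, hgp⟩ := exists_ne_zero_isMaxOn_of_notMem_interior hLc hpL hp.2.2
  have hfle : supportFunction K f ≤ supportFunction L f :=
    ((isMaxOn_iff_supportFunction_eq hK hpK).1 hfp).trans_le (le_supportFunction hL hpL f)
  have hgle : supportFunction L g ≤ supportFunction K g :=
    ((isMaxOn_iff_supportFunction_eq hL hpL).1 hgp).trans_le (le_supportFunction hK hpK g)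
  obtain ⟨k, hk, hkn⟩ := IsCommonOuterNormal.exists_mem_segment hK hL hfle hgle
  rw [← insert_endpoints_openSegment] at hk
  -- If `k` is an endpoint, it is normal to both sets at `p` and replaces the other endpoint.
  obtain rfl | rfl | hk := hk
  · exact ⟨k, k, hf, hf, hfp, (hkn.isMaxOn_iff hK hL hpK hpL).1 hfp, k, by simp, hkn⟩
  · exact ⟨k, k, hg, hg, (hkn.isMaxOn_iff hK hL hpK hpL).2 hgp, hgp, k, by simp, hkn⟩
  · exact ⟨f, g, hf, hg, hfp, hgp, k, hk, hkn⟩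

theorem exists_isCommonOuterNormal_forall_lt [FiniteDimensional ℝ E] (hK : IsCompact K)
    (hKc : Convex ℝ K) (hL : IsCompact L) (hLc : Convex ℝ L)
    (hseg : ∀ p q, segment ℝ p q ⊆ frontier K ∩ frontier L → p = q) {p : E}
    (hp : p ∈ frontier K ∩ frontier L) :
    ∃ k : StrongDual ℝ E, IsCommonOuterNormal K L k ∧
      ∀ q ∈ frontier K ∩ frontier L, q ≠ p → k q < k p := by
  obtain ⟨f, g, hf, hg, hfp, hgp, k, hk, hkn⟩ :=
    exists_isCommonOuterNormal_mem_openSegment hK hKc hL hLc hp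
  refine ⟨k, hkn, fun q hq hqp => ?_⟩
  have hKcl := hK.isClosed.frontier_subset
  have hLcl := hL.isClosed.frontier_subset
  have hfq : f q ≤ f p := hfp (hKcl hq.1)
  have hgq : g q ≤ g p := hgp (hLcl hq.2)
  have hnot_both_eq : ¬(f q = f p ∧ g q = g p) := fun ⟨hf_eq, hg_eq⟩ =>
    hqp (hseg p q (Set.subset_inter
      (segment_subset_frontier_of_isMaxOn hKc hf (hKcl hp.1) (hKcl hq.1) hfp hf_eq)
      (segment_subset_frontier_of_isMaxOn hLc hg (hLcl hp.2) (hLcl hq.2) hgp hg_eq))).symm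
  obtain ⟨a, b, ha, hb, -, rfl⟩ := hk
  change a * f q + b * g q < a * f p + b * g p
  obtain hflt | hfeq := hfq.lt_or_eq
  · exact add_lt_add_of_lt_of_le (mul_lt_mul_of_pos_left hflt ha)
      (mul_le_mul_of_nonneg_left hgq hb.le)
  · have hglt : g q < g p := hgq.lt_of_ne fun hgeq => hnot_both_eq ⟨hfeq, hgeq⟩
    exact add_lt_add_of_le_of_lt (mul_le_mul_of_nonneg_left hfq ha.le)
      (mul_lt_mul_of_pos_left hglt hb)

end SupportingFunctionals

theorem exists_forall_dual_apply_eq_zero_imp_mem_span {𝕜 V : Type*} [Field 𝕜] [AddCommGroup V]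
    [Module 𝕜 V] (hV : Module.finrank 𝕜 V = 2) {w : Module.Dual 𝕜 V} (hw : w ≠ 0) :
    ∃ e : V, ∀ g : Module.Dual 𝕜 V, g e = 0 → g ∈ Submodule.span 𝕜 {w} := by
  have : FiniteDimensional 𝕜 V := .of_finrank_pos (by simp [hV])
  have hker : Module.finrank 𝕜 w.ker = 1 := by
    have := Module.Dual.finrank_ker_add_one_of_ne_zero hw
    lia
  obtain ⟨e, -, he⟩ := finrank_eq_one_iff'.1 hker
  refine ⟨e, fun g hg => ?_⟩
  have hker_le : w.ker ≤ g.ker := fun x hx => by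
    obtain ⟨c, hc⟩ := he ⟨x, hx⟩
    have hcx : c • (e : V) = x := congrArg Subtype.val hc
    rw [LinearMap.mem_ker, ← hcx, map_smul, hg, smul_zero]
  simpa using mem_span_of_iInf_ker_le_ker (L := fun _ : Unit => w) (by simpa using hker_le)

theorem exists_subset_pair_of_injOn_prop {α : Type*} [Nonempty α] {S : Set α} {φ : α → Prop}
    (hφ : Set.InjOn φ S) : ∃ p q, S ⊆ {p, q} := by
  have hfiber (P : Prop) : ∃ p, ∀ x ∈ S, φ x = P → x = p := by
    by_cases h : ∃ p ∈ S, φ p = P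
    · obtain ⟨p, hp, hpP⟩ := h
      exact ⟨p, fun x hx hxP => hφ hx hp (hxP.trans hpP.symm)⟩
    · exact ⟨Classical.arbitrary α, fun x hx hxP => (h ⟨x, hx, hxP⟩).elim⟩
  obtain ⟨p, hp⟩ := hfiber True
  obtain ⟨q, hq⟩ := hfiber False
  exact ⟨p, q, fun x hx => (Classical.propComplete (φ x)).imp (hp x hx) (hq x hx)⟩

section Separated

variable {E : Type*} [NormedAddCommGroup E] [NormedSpace ℝ E] {A B D : Set E}

theorem strictMono_supportFunction_sub_of_separated (hA : IsCompact A) (hAne : A.Nonempty)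
    (hB : IsCompact B) (hBne : B.Nonempty) {w : StrongDual ℝ E}
    (hw : ∀ a ∈ A, ∀ b ∈ B, w b < w a) (f : StrongDual ℝ E) :
    StrictMono fun s : ℝ => supportFunction A (f + s • w) - supportFunction B (f + s • w) := by
  intro s t hst
  obtain ⟨a, ha, hha⟩ := exists_apply_eq_supportFunction hA hAne (f + s • w)
  obtain ⟨b, hb, hhb⟩ := exists_apply_eq_supportFunction hB hBne (f + t • w)
  have hat := le_supportFunction hA ha (f + t • w)
  have hbs := le_supportFunction hB hb (f + s • w)
  have hwab := mul_lt_mul_of_pos_left (hw a ha b hb) (sub_pos.2 hst)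
  simp only [add_apply, smul_apply, smul_eq_mul] at hha hhb hat hbs
  linarith

-- `e` spans the kernel of a separating functional, so the sign of `f e` says on which side of
-- the two sets the common tangent with normal `f` lies.
theorem exists_forall_isCommonOuterNormal_eq_smul (hE : Module.finrank ℝ E = 2)
    (hA : IsCompact A) (hAne : A.Nonempty) (hAc : Convex ℝ A) (hB : IsCompact B)
    (hBne : B.Nonempty) (hBc : Convex ℝ B) (hAB : Disjoint A B) :
    ∃ e : E, ∀ f g, IsCommonOuterNormal A B f → IsCommonOuterNormal A B g →
      ∀ c : ℝ, 0 ≤ c → g e = c * f e → g = c • f := by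
  obtain ⟨w, u, v, hwB, huv, hwA⟩ :=
    geometric_hahn_banach_compact_closed hBc hB hAc hA.isClosed hAB.symm
  have hw (a) (ha : a ∈ A) (b) (hb : b ∈ B) : w b < w a := by
    linarith [hwB b hb, hwA a ha]
  have hw0 : (w : E →ₗ[ℝ] ℝ) ≠ 0 := fun h0 => by
    obtain ⟨a, ha⟩ := hAne
    obtain ⟨b, hb⟩ := hBne
    have hzero (x) : w x = 0 := LinearMap.congr_fun h0 x
    simpa [hzero] using hw a ha b hb
  obtain ⟨e, he⟩ := exists_forall_dual_apply_eq_zero_imp_mem_span hE hw0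
  refine ⟨e, fun f g hf hg c hc hge => ?_⟩
  obtain ⟨s, hs⟩ := Submodule.mem_span_singleton.1 (he (g - c • f) (by simp [hge]))
  have hgs : c • f + s • w = g := by
    ext x
    have hsx : s * w x = g x - c * f x := LinearMap.congr_fun hs x
    change c * f x + s * w x = g x
    rw [hsx, add_sub_cancel]
  have hs0 : s = 0 := by
    refine (strictMono_supportFunction_sub_of_separated hA hAne hB hBne hw (c • f)).injective ?_
    simp only [hgs, zero_smul, add_zero, sub_eq_zero.2 hg, sub_eq_zero.2 (hf.smul hc)]
  simpa [hs0] using hgs.symm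

theorem injOn_apply_pos_of_forall_lt {S : Set E} {e : E} {k : E → StrongDual ℝ E}
    (he : ∀ p ∈ S, ∀ q ∈ S, ∀ c : ℝ, 0 ≤ c → k q e = c * k p e → k q = c • k p)
    (hlt : ∀ p ∈ S, ∀ q ∈ S, q ≠ p → k p q < k p p) :
    Set.InjOn (fun p => 0 < k p e) S := by
  intro p hp q hq hpq
  by_contra hne
  have hkp := hlt p hp q hq (Ne.symm hne)
  have hkpe : k p e ≠ 0 := fun h0 => by
    have hzero : k p = 0 := (he p hp p hp 0 le_rfl (by simp [h0])).trans (zero_smul ℝ _)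
    simp [hzero] at hkp
  have hc : 0 ≤ k q e / k p e := by
    by_cases hpos : 0 < k p e
    · exact div_nonneg (hpq.mp hpos).le hpos.le
    · exact div_nonneg_of_nonpos (not_lt.1 (mt hpq.mpr hpos)) (not_lt.1 hpos)
  have hsmul := he p hp q hq _ hc (div_mul_cancel₀ _ hkpe).symm
  have hkq := hlt q hq p hp hne
  rw [hsmul] at hkq
  exact hkq.not_ge (mul_le_mul_of_nonneg_left hkp.le hc)

theorem stmt_12_general (hE : Module.finrank ℝ E = 2) (hA : IsCompact A) (hAc : Convex ℝ A)
    (hB : IsCompact B) (hBc : Convex ℝ B) (hAB : Disjoint A B) (hD : IsCompact D)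
    (hDc : Convex ℝ D)
    (hseg : ∀ p q, segment ℝ p q ⊆ frontier (A + D) ∩ frontier (B + D) → p = q) :
    ∃ p q : E, frontier (A + D) ∩ frontier (B + D) ⊆ {p, q} := by
  have : FiniteDimensional ℝ E := .of_finrank_pos (by simp [hE])
  obtain hS | ⟨x, hx⟩ := (frontier (A + D) ∩ frontier (B + D)).eq_empty_or_nonempty
  · exact ⟨0, 0, hS ▸ Set.empty_subset _⟩
  obtain ⟨hAne, hDne⟩ := Set.add_nonempty.1 ⟨x, (hA.add hD).isClosed.frontier_subset hx.1⟩
  obtain ⟨hBne, -⟩ := Set.add_nonempty.1 ⟨x, (hB.add hD).isClosed.frontier_subset hx.2⟩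
  obtain ⟨e, he⟩ := exists_forall_isCommonOuterNormal_eq_smul hE hA hAne hAc hB hBne hBc hAB
  choose! k hk hlt using fun p => exists_isCommonOuterNormal_forall_lt (p := p) (hA.add hD)
    (hAc.add hDc) (hB.add hD) (hBc.add hDc) hseg
  have hkAB (p) (hp : p ∈ frontier (A + D) ∩ frontier (B + D)) : IsCommonOuterNormal A B (k p) :=
    (hk p hp).of_add_right hA hAne hB hBne hD hDne
  exact exists_subset_pair_of_injOn_prop (injOn_apply_pos_of_forall_lt
    (fun p hp q hq => he (k p) (k q) (hkAB p hp) (hkAB q hq)) hlt)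

end Separated

theorem segment_infinite_of_ne {E : Type*} [AddCommGroup E] [Module ℝ E] {p q : E} (h : p ≠ q) :
    (segment ℝ p q).Infinite := by
  rw [segment_eq_image_lineMap]
  exact (Set.Icc_infinite zero_lt_one).image (AffineMap.lineMap_injective ℝ h).injOn

/-- Kedem–Livne–Pach–Sharir: if `C₁,…,Cₙ` are pairwise-disjoint compact convex sets in the
plane and `ρ ≥ 0`, the Minkowski sums `Kᵢ* = Cᵢ ⊕ D(ρ)` form a family of pseudo-disks: for
`i ≠ j` (assuming general position, encoded as finiteness of the boundary intersection),
`∂Kᵢ* ∩ ∂Kⱼ*` consists of at most two points. -/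
theorem stmt_12 (n : ℕ) (C : Fin n → Set (EuclideanSpace ℝ (Fin 2))) (ρ : ℝ) (hρ : 0 ≤ ρ)
    (hconv : ∀ i, Convex ℝ (C i)) (hcomp : ∀ i, IsCompact (C i)) (hne : ∀ i, (C i).Nonempty)
    (hdisj : ∀ i j, i ≠ j → Disjoint (C i) (C j)) (i j : Fin n) (hij : i ≠ j)
    (hgen : (frontier (C i + Metric.closedBall (0 : EuclideanSpace ℝ (Fin 2)) ρ) ∩
        frontier (C j + Metric.closedBall (0 : EuclideanSpace ℝ (Fin 2)) ρ)).Finite) :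
    ∃ p q : EuclideanSpace ℝ (Fin 2),
      frontier (C i + Metric.closedBall (0 : EuclideanSpace ℝ (Fin 2)) ρ) ∩
          frontier (C j + Metric.closedBall (0 : EuclideanSpace ℝ (Fin 2)) ρ) ⊆
        {p, q} :=
  stmt_12_general finrank_euclideanSpace_fin (hcomp i) (hconv i) (hcomp j) (hconv j)
    (hdisj i j hij) (isCompact_closedBall 0 ρ) (convex_closedBall 0 ρ)
    fun _ _ hsub => by_contra fun hpq => segment_infinite_of_ne hpq (hgen.subset hsub)
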